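/- Let α be a transition rate function on [d] in (D-Lip) satisfying (Erg), let Φ : S_d → ℝ be in (D-Lip), and define U(t,μ) := Φ(m(t;μ)) and U_t(s, x₁,…,x_N) := U(t−s, (1/N) Σ_{i∈[N]} δ_{x_i}). For any N ≥ 1, let (p_s^N)_{s≥0} be the law of the N-particle continuous-time Markov chain on [d]^N with generator Q^N and arbitrary initial law p_0^N. Then there is a constant C, independent of t, N and p_0^N, such that for all t ≥ 0, | Σ_{x∈[d]^N} p_t^N(x) U_t(t,x) − Σ_{x∈[d]^N} p_0^N(x) U_t(0,x) | ≤ C/N. -/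

import Mathlib

/-!
Write `U(t, μ) = Φ (m(t; μ))`. The difference to be bounded is the integral over `τ ∈ [0, t]` of the
expectation, under `p (t - τ)`, of the generator `Q^N` applied to `U(τ, ·)` minus `∂_τ U(τ, ·)`,
both evaluated at the empirical measure. Three facts make this integral `O(1/N)` uniformly in `t`.

* A function on the simplex with Lipschitz linear functional derivative has a first-order Taylor
  expansion with quadratic remainder (`taylor_simplex`). The derivative is only a one-sided limit
  towards the vertices, so the expansion is first obtained towards vertices, then extended to all
  directions by convexity, then integrated along segments.

* The quadratic remainder of `U(t, ·)` decays like `exp (-lam * t / 2)` (`taylor_U`). (Erg) gives no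
  decay for the Lipschitz constant of the derivative of the flow, but the flow property
  `m(t; ·) = m(t/2; ·) ∘ m(t/2; ·)` (from uniqueness for the Kolmogorov equation) together with the
  exponential contraction does.

* The flow property also gives `∂_τ U(τ, μ)` as the derivative of `U(τ, ·)` at `μ` along the drift
  `μ α(μ)` (`backward_equation`), which is what `Q^N` produces to first order (`gen_affine`). A jump
  moves the empirical measure by at most `2 / N` and there are `N` particles with bounded rates, so
  the two differ by at most a constant times `exp (-lam * τ / 2) / N` (`gen_error`), which is
  integrable in `τ`.
-/

open Finset Filter Topology

/-- The simplex of probability vectors on `Fin d`. -/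
def simplex (d : ℕ) : Set (Fin d → ℝ) :=
  {μ | (∀ z, 0 ≤ μ z) ∧ ∑ z, μ z = 1}

/-- The ℓ¹ norm on `Fin d → ℝ`. -/
def l1 {d : ℕ} (v : Fin d → ℝ) : ℝ := ∑ z, |v z|

/-- The `z`-th standard basis vector (Dirac measure at `z`). -/
def bvec {d : ℕ} (z : Fin d) : Fin d → ℝ := fun y => if y = z then 1 else 0

/-- Linear functional derivative: `δF/δm (μ, z) = v`. -/
def HasLFDerivAt {d : ℕ} (F : (Fin d → ℝ) → ℝ) (μ : Fin d → ℝ) (z : Fin d) (v : ℝ) : Prop :=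
  Filter.Tendsto (fun ε : ℝ => (F ((1 - ε) • μ + ε • bvec z) - F μ) / ε)
    (nhdsWithin 0 (Set.Ioi 0)) (nhds v)

/-- Directional derivative `D^m_{yz} F (μ) = v`. -/
def HasDmDerivAt {d : ℕ} (F : (Fin d → ℝ) → ℝ) (μ : Fin d → ℝ) (y z : Fin d) (v : ℝ) : Prop :=
  Filter.Tendsto (fun ε : ℝ => (F (μ + ε • (bvec z - bvec y)) - F μ) / ε)
    (nhdsWithin 0 (Set.Ioi 0)) (nhds v)

/-- `α` is a transition rate function on `[d]`. -/
def IsRate (d : ℕ) (α : (Fin d → ℝ) → Matrix (Fin d) (Fin d) ℝ) : Prop :=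
  ContinuousOn α (simplex d) ∧
  (∀ μ ∈ simplex d, ∀ x y, x ≠ y → 0 ≤ α μ x y) ∧
  (∀ μ ∈ simplex d, ∀ x, ∑ y, α μ x y = 0)

/-- `m` is the measure flow solving the nonlinear Kolmogorov equation for `α`. -/
def IsFlow {d : ℕ} (α : (Fin d → ℝ) → Matrix (Fin d) (Fin d) ℝ)
    (m : ℝ → (Fin d → ℝ) → Fin d → ℝ) : Prop :=
  ∀ μ ∈ simplex d, m 0 μ = μ ∧ (∀ t, 0 ≤ t → m t μ ∈ simplex d) ∧
    ∀ t, 0 ≤ t → HasDerivAt (fun s => m s μ) (Matrix.vecMul (m t μ) (α (m t μ))) t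

/-- A real-valued function on the simplex is in (D-Lip) with linear functional derivative `δF`. -/
def DLipR {d : ℕ} (F : (Fin d → ℝ) → ℝ) (δF : (Fin d → ℝ) → Fin d → ℝ) : Prop :=
  (∃ K : ℝ, ∀ μ ∈ simplex d, ∀ ν ∈ simplex d, |F μ - F ν| ≤ K * l1 (μ - ν)) ∧
  (∀ μ ∈ simplex d, ∀ z, HasLFDerivAt F μ z (δF μ z)) ∧
  (∃ K : ℝ, ∀ μ ∈ simplex d, ∀ ν ∈ simplex d, l1 (δF μ - δF ν) ≤ K * l1 (μ - ν))

/-- The matrix-valued transition rate function is in (D-Lip), componentwise. -/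
def DLipRate {d : ℕ} (α : (Fin d → ℝ) → Matrix (Fin d) (Fin d) ℝ)
    (δα : (Fin d → ℝ) → Fin d → Matrix (Fin d) (Fin d) ℝ) : Prop :=
  ∀ x y, DLipR (fun μ => α μ x y) (fun μ z => δα μ z x y)

/-- The ergodicity assumption (Erg) for the flow `m`, with derivative data `δm`. -/
def Erg {d : ℕ} (m : ℝ → (Fin d → ℝ) → Fin d → ℝ)
    (δm : ℝ → (Fin d → ℝ) → Fin d → Fin d → ℝ) (lam c₁ k₁ : ℝ) : Prop :=
  0 < lam ∧ 0 < c₁ ∧ 0 < k₁ ∧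
  (∀ t, 0 ≤ t → ∀ μ ∈ simplex d, ∀ μ' ∈ simplex d,
    l1 (m t μ - m t μ') ≤ c₁ * Real.exp (-lam * t) * l1 (μ - μ')) ∧
  (∀ t, 0 ≤ t → ∀ μ ∈ simplex d, ∀ z x, HasLFDerivAt (fun ν => m t ν x) μ z (δm t μ z x)) ∧
  (∀ t, 0 ≤ t → ∀ μ ∈ simplex d, ∀ μ' ∈ simplex d, ∀ z,
    l1 (δm t μ z - δm t μ' z) ≤ k₁ * l1 (μ - μ'))

/-- Empirical measure of a configuration of `N` particles. -/
noncomputable def empMeas {d N : ℕ} (x : Fin N → Fin d) : Fin d → ℝ :=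
  fun z => (∑ i, if x i = z then (1 : ℝ) else 0) / N

/-- Generator of the `N`-particle Markov chain. -/
noncomputable def genQ {d N : ℕ} (α : (Fin d → ℝ) → Matrix (Fin d) (Fin d) ℝ)
    (F : (Fin N → Fin d) → ℝ) (x : Fin N → Fin d) : ℝ :=
  ∑ i, ∑ y ∈ Finset.univ.filter (fun y => y ≠ x i),
    α (empMeas x) (x i) y * (F (Function.update x i y) - F x)

/-- `p` is the law of the `N`-particle chain: a curve of probability vectors solving the
forward Kolmogorov equation (in weak form, tested against all functions). -/
def IsLaw {d N : ℕ} (α : (Fin d → ℝ) → Matrix (Fin d) (Fin d) ℝ)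
    (p : ℝ → (Fin N → Fin d) → ℝ) : Prop :=
  (∀ t, 0 ≤ t → (∀ x, 0 ≤ p t x) ∧ (∑ x, p t x) = 1) ∧
  (∀ F : (Fin N → Fin d) → ℝ, ∀ t, 0 ≤ t →
    HasDerivAt (fun s => ∑ x, p s x * F x) (∑ x, p t x * genQ α F x) t)

/-- The linearized Kolmogorov operator `L_η`. -/
def linOp {d : ℕ} (α : (Fin d → ℝ) → Matrix (Fin d) (Fin d) ℝ)
    (δα : (Fin d → ℝ) → Fin d → Matrix (Fin d) (Fin d) ℝ)
    (η q : Fin d → ℝ) : Fin d → ℝ :=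
  Matrix.vecMul η (∑ z, q z • δα η z) + Matrix.vecMul q (α η)

/-- The linearized ergodicity assumption (Lin-Erg) with constants `lam`, `c₂`. -/
def LinErg {d : ℕ} (α : (Fin d → ℝ) → Matrix (Fin d) (Fin d) ℝ)
    (δα : (Fin d → ℝ) → Fin d → Matrix (Fin d) (Fin d) ℝ)
    (m : ℝ → (Fin d → ℝ) → Fin d → ℝ) (lam c₂ : ℝ) : Prop :=
  ∀ μ ∈ simplex d, ∀ q₀ : Fin d → ℝ, (∑ z, q₀ z) = 0 →
    ∀ r : ℝ → Fin d → ℝ, Measurable r → (∃ Cb : ℝ, ∀ t, 0 ≤ t → l1 (r t) ≤ Cb) →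
      (∀ t, 0 ≤ t → (∑ z, r t z) = 0) →
      ∀ q : ℝ → Fin d → ℝ, q 0 = q₀ →
        (∀ t, 0 ≤ t → HasDerivAt q (linOp α δα (m t μ) (q t) + r t) t) →
        ∀ t, 0 ≤ t →
          l1 (q t) ≤ c₂ * (Real.exp (-lam * t) * l1 q₀ +
            ∫ s in (0:ℝ)..t, Real.exp (-lam * (t - s)) * l1 (r s))

/-! ### The ℓ¹ norm and the simplex -/

lemma l1_nonneg {d : ℕ} (v : Fin d → ℝ) : 0 ≤ l1 v :=
  Finset.sum_nonneg fun _ _ => abs_nonneg _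

lemma l1_add_le {d : ℕ} (u v : Fin d → ℝ) : l1 (u + v) ≤ l1 u + l1 v := by
  unfold l1
  rw [← Finset.sum_add_distrib]
  exact Finset.sum_le_sum fun z _ => abs_add_le _ _

lemma l1_smul {d : ℕ} (a : ℝ) (v : Fin d → ℝ) : l1 (a • v) = |a| * l1 v := by
  simp [l1, abs_mul, Finset.mul_sum]

lemma l1_neg {d : ℕ} (v : Fin d → ℝ) : l1 (-v) = l1 v := by
  simp [l1]

lemma l1_sub_le {d : ℕ} (u v : Fin d → ℝ) : l1 (u - v) ≤ l1 u + l1 v := by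
  rw [sub_eq_add_neg, ← l1_neg v]
  exact l1_add_le _ _

lemma abs_le_l1 {d : ℕ} (v : Fin d → ℝ) (z : Fin d) : |v z| ≤ l1 v :=
  Finset.single_le_sum (f := fun z => |v z|) (fun _ _ => abs_nonneg _) (Finset.mem_univ z)

lemma l1_le_card_mul {d : ℕ} (v : Fin d → ℝ) (B : ℝ) (h : ∀ z, |v z| ≤ B) : l1 v ≤ d * B := by
  unfold l1
  calc ∑ z, |v z| ≤ ∑ _z : Fin d, B := Finset.sum_le_sum fun z _ => h z
    _ = d * B := by simp

lemma l1_le_norm {d : ℕ} (v : Fin d → ℝ) : l1 v ≤ d * ‖v‖ :=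
  l1_le_card_mul v _ fun z => norm_le_pi_norm v z

lemma l1_simplex {d : ℕ} {μ : Fin d → ℝ} (h : μ ∈ simplex d) : l1 μ = 1 := by
  rw [← h.2]
  exact Finset.sum_congr rfl fun z _ => abs_of_nonneg (h.1 z)

lemma l1_sub_simplex {d : ℕ} {μ ν : Fin d → ℝ} (h : μ ∈ simplex d) (h' : ν ∈ simplex d) :
    l1 (μ - ν) ≤ 2 := by
  have := l1_sub_le μ ν
  rw [l1_simplex h, l1_simplex h'] at this
  linarith

lemma simplex_eq (d : ℕ) : simplex d = stdSimplex ℝ (Fin d) := rfl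

lemma bvec_mem {d : ℕ} (z : Fin d) : bvec z ∈ simplex d := by
  constructor
  · intro y; unfold bvec; split_ifs <;> norm_num
  · simp [bvec]

lemma seg_mem {d : ℕ} {μ ν : Fin d → ℝ} (h : μ ∈ simplex d) (h' : ν ∈ simplex d) {ε : ℝ}
    (h0 : 0 ≤ ε) (h1 : ε ≤ 1) : (1 - ε) • μ + ε • ν ∈ simplex d :=
  convex_stdSimplex ℝ (Fin d) h h' (by linarith) h0 (by ring)

lemma abs_dot_le {d : ℕ} (w v : Fin d → ℝ) (B : ℝ) (h : ∀ z, |w z| ≤ B) :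
    |dotProduct w v| ≤ B * l1 v := by
  unfold dotProduct l1
  rw [Finset.mul_sum]
  refine (Finset.abs_sum_le_sum_abs _ _).trans (Finset.sum_le_sum fun z _ => ?_)
  rw [abs_mul]
  exact mul_le_mul_of_nonneg_right (h z) (abs_nonneg _)

lemma continuousOn_of_l1_lip {d : ℕ} {F : (Fin d → ℝ) → ℝ} {K : ℝ}
    (hF : ∀ μ ∈ simplex d, ∀ ν ∈ simplex d, |F μ - F ν| ≤ K * l1 (μ - ν)) :
    ContinuousOn F (simplex d) := by
  intro μ hμ
  rw [ContinuousWithinAt, tendsto_iff_norm_sub_tendsto_zero]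
  have hc : Continuous fun ν : Fin d → ℝ => K * l1 (ν - μ) := by unfold l1; fun_prop
  have h0 : Tendsto (fun ν : Fin d → ℝ => K * l1 (ν - μ)) (𝓝[simplex d] μ) (𝓝 0) := by
    have := (hc.tendsto μ).mono_left (nhdsWithin_le_nhds (s := simplex d))
    simpa [l1] using this
  refine squeeze_zero' (Eventually.of_forall fun _ => norm_nonneg _) ?_ h0
  filter_upwards [self_mem_nhdsWithin] with ν hν using hF ν hν μ hμ

/-! ### First-order Taylor expansion on the simplex -/

/-- A function that agrees with `g` up to the square of a differentiable quantity vanishing at `s`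
has the same right derivative as `g`. -/
lemma hasDerivWithinAt_of_quadratic {E : Type*} [NormedAddCommGroup E] [NormedSpace ℝ E]
    {f g : ℝ → ℝ} {r : ℝ → E} {g' C s : ℝ} {r' : E}
    (hg : HasDerivWithinAt g g' (Set.Ici s) s) (hr : HasDerivWithinAt r r' (Set.Ici s) s)
    (hr0 : r s = 0)
    (hb : ∀ᶠ x in 𝓝[≥] s, |(f x - g x) - (f s - g s)| ≤ C * ‖r x‖ ^ 2) :
    HasDerivWithinAt f g' (Set.Ici s) s := by
  have h0 : HasDerivWithinAt (fun x => f x - g x) 0 (Set.Ici s) s := by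
    rw [hasDerivWithinAt_iff_isLittleO]
    have h1 : (fun x => (f x - g x) - (f s - g s)) =O[𝓝[≥] s] fun x => ‖r x‖ * ‖r x‖ := by
      refine Asymptotics.IsBigO.of_bound C ?_
      filter_upwards [hb] with x hx
      rw [Real.norm_eq_abs, norm_mul, norm_norm]
      calc _ ≤ _ := hx
        _ = _ := by ring
    have h2 : (fun x => ‖r x‖) =O[𝓝[≥] s] fun x => x - s := by
      have h := hr.hasFDerivWithinAt.isBigO_sub
      have e : (fun x => r x - r s) = r := by funext x; rw [hr0, sub_zero]
      rw [e] at h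
      exact h.norm_left
    have h3 : (fun x => ‖r x‖) =o[𝓝[≥] s] fun _ => (1 : ℝ) := by
      rw [Asymptotics.isLittleO_one_iff]
      have := hr.continuousWithinAt.norm
      rwa [ContinuousWithinAt, hr0, norm_zero] at this
    have h4 := h1.trans_isLittleO (h3.mul_isBigO h2)
    simpa using h4
  have := h0.add hg
  rw [zero_add] at this
  exact this.congr_of_mem (fun x _ => by simp) Set.self_mem_Ici

/-- A one-sided slope at the base point `(1 - θ) μ + θ ν` towards `ν` gives the right derivative of
the segment parametrised from `μ`; the factor `1 - θ` comes from the change of base point. -/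
lemma hasDerivWithinAt_seg {d : ℕ} {F : (Fin d → ℝ) → ℝ} {μ ν : Fin d → ℝ} {θ D : ℝ}
    (hθ : θ < 1)
    (h : HasDerivWithinAt
      (fun ε : ℝ => F ((1 - ε) • ((1 - θ) • μ + θ • ν) + ε • ν)) D (Set.Ici 0) 0) :
    HasDerivWithinAt (fun ε : ℝ => F ((1 - ε) • μ + ε • ν)) (D / (1 - θ)) (Set.Ici θ) θ := by
  have hpos : 0 < 1 - θ := by linarith
  have ha : HasDerivWithinAt (fun ε : ℝ => (ε - θ) / (1 - θ)) (1 / (1 - θ)) (Set.Ici θ) θ :=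
    ((hasDerivWithinAt_id θ _).sub_const θ).div_const _
  have hm : Set.MapsTo (fun ε : ℝ => (ε - θ) / (1 - θ)) (Set.Ici θ) (Set.Ici 0) := fun ε hε =>
    div_nonneg (sub_nonneg.2 hε) hpos.le
  have h' : HasDerivWithinAt
      (fun ε : ℝ => F ((1 - ε) • ((1 - θ) • μ + θ • ν) + ε • ν)) D (Set.Ici 0)
      ((fun ε : ℝ => (ε - θ) / (1 - θ)) θ) := by simpa using h
  have := h'.comp θ ha hm
  rw [mul_one_div] at this
  refine this.congr_of_mem (fun ε _ => ?_) Set.self_mem_Ici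
  simp only [Function.comp]
  congr 1
  ext z
  simp only [Pi.add_apply, Pi.smul_apply, smul_eq_mul]
  field_simp
  ring

lemma HasLFDerivAt.hasDerivWithinAt {d : ℕ} {F : (Fin d → ℝ) → ℝ} {μ : Fin d → ℝ} {z : Fin d}
    {v : ℝ} (h : HasLFDerivAt F μ z v) :
    HasDerivWithinAt (fun ε : ℝ => F ((1 - ε) • μ + ε • bvec z)) v (Set.Ici 0) 0 := by
  rw [hasDerivWithinAt_iff_tendsto_slope, Set.Ici_sdiff_left]
  unfold HasLFDerivAt at h
  refine h.congr fun ε => ?_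
  simp [slope_def_field]

lemma abs_lfderiv_le {d : ℕ} {F : (Fin d → ℝ) → ℝ} {K : ℝ} (hK : 0 ≤ K)
    (hF : ∀ μ ∈ simplex d, ∀ ν ∈ simplex d, |F μ - F ν| ≤ K * l1 (μ - ν))
    {μ : Fin d → ℝ} (hμ : μ ∈ simplex d) {z : Fin d} {v : ℝ} (h : HasLFDerivAt F μ z v) :
    |v| ≤ 2 * K := by
  have hh := h.abs
  refine le_of_tendsto hh ?_
  have h1 : Set.Ioc (0 : ℝ) 1 ∈ 𝓝[>] (0 : ℝ) := Ioc_mem_nhdsGT one_pos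
  filter_upwards [h1] with ε hε
  rw [abs_div, abs_of_pos hε.1, div_le_iff₀ hε.1]
  have h2 := hF _ (seg_mem hμ (bvec_mem z) hε.1.le hε.2) μ hμ
  have h3 : (1 - ε) • μ + ε • bvec z - μ = ε • (bvec z - μ) := by module
  rw [h3, l1_smul, abs_of_pos hε.1] at h2
  have h4 := l1_sub_simplex (bvec_mem z) hμ
  have h5 : 0 ≤ K * ε := mul_nonneg hK hε.1.le
  nlinarith

lemma continuousOn_seg {d : ℕ} {F : (Fin d → ℝ) → ℝ} (hF : ContinuousOn F (simplex d))
    {μ ν : Fin d → ℝ} (h : μ ∈ simplex d) (h' : ν ∈ simplex d) {b : ℝ} (hb : b ≤ 1) :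
    ContinuousOn (fun ε : ℝ => F ((1 - ε) • μ + ε • ν)) (Set.Icc 0 b) := by
  refine hF.comp (t := simplex d) (f := fun ε : ℝ => (1 - ε) • μ + ε • ν) (by fun_prop) ?_
  intro ε hε
  exact seg_mem h h' hε.1 (hε.2.trans hb)

/-- Second-order expansion from `μ` towards a vertex of the simplex, uniform in `μ`. -/
lemma taylor_vertex {d : ℕ} {F : (Fin d → ℝ) → ℝ} {w : (Fin d → ℝ) → Fin d → ℝ} {K K' : ℝ}
    (hK : 0 ≤ K) (hK' : 0 ≤ K')
    (hF : ∀ μ ∈ simplex d, ∀ ν ∈ simplex d, |F μ - F ν| ≤ K * l1 (μ - ν))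
    (hw : ∀ μ ∈ simplex d, ∀ z, HasLFDerivAt F μ z (w μ z))
    (hwL : ∀ μ ∈ simplex d, ∀ ν ∈ simplex d, ∀ z, |w μ z - w ν z| ≤ K' * l1 (μ - ν))
    (z : Fin d) {μ : Fin d → ℝ} (hμ : μ ∈ simplex d) {ε : ℝ} (h0 : 0 ≤ ε) (h1 : ε ≤ 1 / 2) :
    |F ((1 - ε) • μ + ε • bvec z) - F μ - ε * w μ z| ≤ (4 * K' + 4 * K) * ε ^ 2 := by
  have key := norm_image_sub_le_of_norm_deriv_right_le_segment (a := 0) (b := ε)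
    (f := fun θ : ℝ => F ((1 - θ) • μ + θ • bvec z) - θ * w μ z)
    (f' := fun θ => w ((1 - θ) • μ + θ • bvec z) z / (1 - θ) - w μ z)
    (C := (4 * K' + 4 * K) * ε)
    ((continuousOn_seg (continuousOn_of_l1_lip hF) hμ (bvec_mem z) (by linarith)).sub
      (by fun_prop)) ?_ ?_ ε ⟨h0, le_rfl⟩
  · simp only [sub_zero, one_smul, zero_smul, add_zero, zero_mul, Real.norm_eq_abs] at key
    calc _ = |F ((1 - ε) • μ + ε • bvec z) - ε * w μ z - F μ| := by congr 1; ring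
      _ ≤ _ := key
      _ = _ := by ring
  · intro θ hθ
    have hs := seg_mem hμ (bvec_mem z) hθ.1 (by linarith [hθ.2] : θ ≤ 1)
    refine (hasDerivWithinAt_seg (by linarith [hθ.2]) (hw _ hs z).hasDerivWithinAt).sub ?_
    simpa using (hasDerivWithinAt_id θ _).mul_const (w μ z)
  · intro θ hθ
    have hs := seg_mem hμ (bvec_mem z) hθ.1 (by linarith [hθ.2] : θ ≤ 1)
    have hpos : 0 < 1 - θ := by linarith [hθ.2]
    have e1 := hwL _ hs μ hμ z
    have h3 : (1 - θ) • μ + θ • bvec z - μ = θ • (bvec z - μ) := by module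
    rw [h3, l1_smul, abs_of_nonneg hθ.1] at e1
    have h4 := l1_sub_simplex (bvec_mem z) hμ
    have h5 : K' * (θ * l1 (bvec z - μ)) ≤ K' * (θ * 2) := by
      gcongr
      exact hθ.1
    have e2 := abs_lfderiv_le hK hF hμ (hw μ hμ z)
    rw [Real.norm_eq_abs]
    set A := w ((1 - θ) • μ + θ • bvec z) z
    have : A / (1 - θ) - w μ z = ((A - w μ z) + θ * w μ z) / (1 - θ) := by field_simp; ring
    rw [this, abs_div, abs_of_pos hpos, div_le_iff₀ hpos]
    have e3 : |A - w μ z + θ * w μ z| ≤ K' * (θ * 2) + θ * (2 * K) := by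
      refine (abs_add_le _ _).trans ?_
      rw [abs_mul, abs_of_nonneg hθ.1]
      have := mul_le_mul_of_nonneg_left e2 hθ.1
      linarith
    have e4 : K' * (θ * 2) + θ * (2 * K) ≤ (2 * K' + 2 * K) * ε := by
      have := mul_le_mul_of_nonneg_left hθ.2.le (by positivity : 0 ≤ 2 * K' + 2 * K)
      linarith
    have e5 : 0 ≤ (2 * K' + 2 * K) * ε := by positivity
    nlinarith [hθ.2]

/-- The expansion of `taylor_vertex` holds towards every point of the simplex: the set of admissible
end points contains the vertices and is convex, since moving by `ε (a ν₁ + b ν₂)` differs from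
moving by `ε a ν₁` and then `ε b ν₂` only to second order in `ε`. -/
lemma taylor_direction {d : ℕ} {F : (Fin d → ℝ) → ℝ} {w : (Fin d → ℝ) → Fin d → ℝ} {K K' : ℝ}
    (hK : 0 ≤ K) (hK' : 0 ≤ K')
    (hF : ∀ μ ∈ simplex d, ∀ ν ∈ simplex d, |F μ - F ν| ≤ K * l1 (μ - ν))
    (hw : ∀ μ ∈ simplex d, ∀ z, HasLFDerivAt F μ z (w μ z))
    (hwL : ∀ μ ∈ simplex d, ∀ ν ∈ simplex d, ∀ z, |w μ z - w ν z| ≤ K' * l1 (μ - ν))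
    {ν : Fin d → ℝ} (hν : ν ∈ simplex d) :
    ∃ C : ℝ, ∀ μ ∈ simplex d, ∀ ε : ℝ, 0 ≤ ε → ε ≤ 1 / 2 →
      |F ((1 - ε) • μ + ε • ν) - F μ - ε * dotProduct (w μ) ν| ≤ C * ε ^ 2 := by
  suffices h : simplex d ⊆ {ν | ν ∈ simplex d ∧ ∃ C : ℝ, 0 ≤ C ∧ ∀ μ ∈ simplex d, ∀ ε : ℝ,
      0 ≤ ε → ε ≤ 1 / 2 →
      |F ((1 - ε) • μ + ε • ν) - F μ - ε * dotProduct (w μ) ν| ≤ C * ε ^ 2} by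
    obtain ⟨_, C, _, hC⟩ := h hν
    exact ⟨C, hC⟩
  rw [simplex_eq, ← convexHull_basis_eq_stdSimplex]
  refine convexHull_min ?_ ?_
  · rintro _ ⟨z, rfl⟩
    have e : (fun j => if z = j then (1 : ℝ) else 0) = bvec z := by
      funext j; simp [bvec, eq_comm]
    simp only [e, convexHull_basis_eq_stdSimplex, ← simplex_eq]
    refine ⟨bvec_mem z, 4 * K' + 4 * K, by positivity, fun μ hμ ε h0 h1 => ?_⟩
    have := taylor_vertex hK hK' hF hw hwL z hμ h0 h1
    have e2 : dotProduct (w μ) (bvec z) = w μ z := by simp [dotProduct, bvec]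
    rwa [e2]
  · simp only [convexHull_basis_eq_stdSimplex, ← simplex_eq]
    rintro ν₁ ⟨hν₁, C₁, hC₁, h₁⟩ ν₂ ⟨hν₂, C₂, hC₂, h₂⟩ a b ha hb hab
    refine ⟨convex_stdSimplex ℝ (Fin d) hν₁ hν₂ ha hb hab,
      C₁ + C₂ + 2 * K' + 2 * K, by positivity, fun μ hμ ε h0 h1 => ?_⟩
    have ha1 : a ≤ 1 := by linarith
    have hb1 : b ≤ 1 := by linarith
    have hεa : ε * a ≤ ε := mul_le_of_le_one_right h0 ha1
    have hεb : ε * b ≤ ε := mul_le_of_le_one_right h0 hb1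
    have hεa0 : 0 ≤ ε * a := by positivity
    have hεb0 : 0 ≤ ε * b := by positivity
    set μ₁ := (1 - ε * a) • μ + (ε * a) • ν₁ with hμ₁d
    have hμ₁ : μ₁ ∈ simplex d := seg_mem hμ hν₁ hεa0 (by linarith)
    set μ₂ := (1 - ε * b) • μ₁ + (ε * b) • ν₂ with hμ₂d
    have hμ₂ : μ₂ ∈ simplex d := seg_mem hμ₁ hν₂ hεb0 (by linarith)
    have hν' : a • ν₁ + b • ν₂ ∈ simplex d := convex_stdSimplex ℝ (Fin d) hν₁ hν₂ ha hb hab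
    set μ₃ := (1 - ε) • μ + ε • (a • ν₁ + b • ν₂) with hμ₃d
    have hμ₃ : μ₃ ∈ simplex d := seg_mem hμ hν' h0 (by linarith)
    have s1 : |F μ₁ - F μ - ε * a * dotProduct (w μ) ν₁| ≤ C₁ * ε ^ 2 := by
      refine (h₁ μ hμ _ hεa0 (by linarith)).trans ?_
      gcongr
    have s2 : |F μ₂ - F μ₁ - ε * b * dotProduct (w μ₁) ν₂| ≤ C₂ * ε ^ 2 := by
      refine (h₂ μ₁ hμ₁ _ hεb0 (by linarith)).trans ?_
      gcongr
    have s3 : |F μ₃ - F μ₂| ≤ 2 * K * ε ^ 2 := by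
      refine (hF _ hμ₃ _ hμ₂).trans ?_
      have e : μ₃ - μ₂ = (ε * a * (ε * b)) • (ν₁ - μ) := by
        have hb' : b = 1 - a := by linarith
        rw [hμ₃d, hμ₂d, hμ₁d, hb']
        module
      rw [e, l1_smul, abs_of_nonneg (mul_nonneg hεa0 hεb0)]
      have h4 := l1_sub_simplex hν₁ hμ
      have h5 : ε * a * (ε * b) * l1 (ν₁ - μ) ≤ ε * ε * 2 := by
        have := l1_nonneg (ν₁ - μ)
        gcongr
      have := mul_le_mul_of_nonneg_left h5 hK
      linarith
    have s4 : |ε * b * (dotProduct (w μ₁) ν₂ - dotProduct (w μ) ν₂)| ≤ 2 * K' * ε ^ 2 := by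
      rw [← sub_dotProduct, abs_mul, abs_of_nonneg hεb0]
      have e := abs_dot_le (w μ₁ - w μ) ν₂ _ fun z => hwL μ₁ hμ₁ μ hμ z
      rw [l1_simplex hν₂, mul_one] at e
      have e3 : μ₁ - μ = (ε * a) • (ν₁ - μ) := by rw [hμ₁d]; module
      rw [e3, l1_smul, abs_of_nonneg hεa0] at e
      have h4 := l1_sub_simplex hν₁ hμ
      have h5 : K' * (ε * a * l1 (ν₁ - μ)) ≤ K' * (ε * 2) := by
        have := l1_nonneg (ν₁ - μ)
        gcongr
      calc _ ≤ ε * (K' * (ε * 2)) := by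
            gcongr
            exact e.trans h5
        _ = _ := by ring
    have e : F μ₃ - F μ - ε * dotProduct (w μ) (a • ν₁ + b • ν₂) =
        (F μ₁ - F μ - ε * a * dotProduct (w μ) ν₁) +
        (F μ₂ - F μ₁ - ε * b * dotProduct (w μ₁) ν₂) + (F μ₃ - F μ₂) +
        ε * b * (dotProduct (w μ₁) ν₂ - dotProduct (w μ) ν₂) := by
      rw [dotProduct_add, dotProduct_smul, dotProduct_smul, smul_eq_mul, smul_eq_mul]
      ring
    rw [e]
    rw [abs_le] at s1 s2 s3 s4 ⊢
    constructor <;> linarith [s1.1, s1.2, s2.1, s2.2, s3.1, s3.2, s4.1, s4.2]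

/-- First-order Taylor expansion on the simplex, with quadratic remainder, for a function with a
Lipschitz linear functional derivative `w`. -/
lemma taylor_simplex {d : ℕ} {F : (Fin d → ℝ) → ℝ} {w : (Fin d → ℝ) → Fin d → ℝ} {K K' : ℝ}
    (hK : 0 ≤ K) (hK' : 0 ≤ K')
    (hF : ∀ μ ∈ simplex d, ∀ ν ∈ simplex d, |F μ - F ν| ≤ K * l1 (μ - ν))
    (hw : ∀ μ ∈ simplex d, ∀ z, HasLFDerivAt F μ z (w μ z))
    (hwL : ∀ μ ∈ simplex d, ∀ ν ∈ simplex d, ∀ z, |w μ z - w ν z| ≤ K' * l1 (μ - ν))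
    {μ ν : Fin d → ℝ} (hμ : μ ∈ simplex d) (hν : ν ∈ simplex d) :
    |F ν - F μ - dotProduct (w μ) (ν - μ)| ≤ K' * l1 (ν - μ) ^ 2 := by
  have hslope : ∀ η ∈ simplex d,
      HasDerivWithinAt (fun ε : ℝ => F ((1 - ε) • η + ε • ν)) (dotProduct (w η) ν)
        (Set.Ici 0) 0 := by
    intro η hη
    obtain ⟨C, hC⟩ := taylor_direction hK hK' hF hw hwL hν
    refine hasDerivWithinAt_of_quadratic (g := fun ε => ε * dotProduct (w η) ν) (r := fun ε => ε)
      (C := C) (by simpa using (hasDerivWithinAt_id (0 : ℝ) _).mul_const (dotProduct (w η) ν))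
      (hasDerivWithinAt_id _ _) rfl ?_
    filter_upwards [Icc_mem_nhdsGE (by norm_num : (0 : ℝ) < 1 / 2)] with ε hε
    have := hC η hη ε hε.1 hε.2
    simp only [sub_zero, one_smul, zero_smul, add_zero, zero_mul, Real.norm_eq_abs, sq_abs]
    calc _ = |F ((1 - ε) • η + ε • ν) - F η - ε * dotProduct (w η) ν| := by congr 1; ring
      _ ≤ _ := this
  -- The derivative in the direction of the base point itself vanishes.
  have hzero : ∀ η ∈ simplex d, dotProduct (w η) η = 0 := by
    intro η hη
    obtain ⟨C, hC⟩ := taylor_direction hK hK' hF hw hwL hη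
    have h1 : Tendsto (fun ε : ℝ => C * ε) (𝓝[>] 0) (𝓝 0) := by
      have : Continuous fun ε : ℝ => C * ε := by fun_prop
      have := (this.tendsto 0).mono_left (nhdsWithin_le_nhds (s := Set.Ioi 0))
      simpa using this
    have h2 : |dotProduct (w η) η| ≤ 0 := by
      refine ge_of_tendsto h1 ?_
      filter_upwards [Ioc_mem_nhdsGT (by norm_num : (0 : ℝ) < 1 / 2)] with ε hε
      have := hC η hη ε hε.1.le hε.2
      have e : (1 - ε) • η + ε • η = η := by module
      rw [e, sub_self, zero_sub, abs_neg, abs_mul, abs_of_pos hε.1] at this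
      have hp := hε.1
      by_contra hcon
      push Not at hcon
      nlinarith
    exact abs_nonpos_iff.1 h2
  have key := norm_image_sub_le_of_norm_deriv_right_le_segment (a := 0) (b := 1)
    (f := fun θ : ℝ => F ((1 - θ) • μ + θ • ν) - θ * dotProduct (w μ) (ν - μ))
    (f' := fun θ => dotProduct (w ((1 - θ) • μ + θ • ν)) ν / (1 - θ) - dotProduct (w μ) (ν - μ))
    (C := K' * l1 (ν - μ) ^ 2)
    ((continuousOn_seg (continuousOn_of_l1_lip hF) hμ hν le_rfl).sub
      (by fun_prop)) ?_ ?_ 1 ⟨zero_le_one, le_rfl⟩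
  · simp only [sub_zero, one_smul, zero_smul, add_zero, zero_mul, Real.norm_eq_abs, sub_self,
      zero_add, one_mul, mul_one] at key
    calc _ = _ := by congr 1; ring
      _ ≤ _ := key
  · intro θ hθ
    have hs := seg_mem hμ hν hθ.1 hθ.2.le
    refine (hasDerivWithinAt_seg hθ.2 (hslope _ hs)).sub ?_
    simpa using (hasDerivWithinAt_id θ _).mul_const (dotProduct (w μ) (ν - μ))
  · intro θ hθ
    have hs := seg_mem hμ hν hθ.1 hθ.2.le
    have hpos : 0 < 1 - θ := by linarith [hθ.2]
    have hz := hzero _ hs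
    have hl := fun z => hwL _ hs μ hμ z
    set η := (1 - θ) • μ + θ • ν with hη
    have e0 : η - μ = θ • (ν - μ) := by rw [hη]; module
    rw [e0, l1_smul, abs_of_nonneg hθ.1] at hl
    have e1 : dotProduct (w η) ν / (1 - θ) = dotProduct (w η) (ν - μ) := by
      have : ν - μ = (1 - θ)⁻¹ • (ν - η) := by
        rw [eq_inv_smul_iff₀ hpos.ne', hη]; module
      rw [this, dotProduct_smul, dotProduct_sub, hz, smul_eq_mul]
      ring
    rw [e1, ← sub_dotProduct, Real.norm_eq_abs]
    refine (abs_dot_le _ _ _ hl).trans ?_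
    have h5 : θ * l1 (ν - μ) ≤ l1 (ν - μ) := mul_le_of_le_one_left (l1_nonneg _) hθ.2.le
    calc _ ≤ K' * l1 (ν - μ) * l1 (ν - μ) := by
          gcongr
          exact l1_nonneg _
      _ = _ := by ring

/-! ### The measure flow -/

lemma rate_lip {d : ℕ} {α : (Fin d → ℝ) → Matrix (Fin d) (Fin d) ℝ}
    {δα : (Fin d → ℝ) → Fin d → Matrix (Fin d) (Fin d) ℝ} (hαD : DLipRate α δα) :
    ∃ K : ℝ, 0 ≤ K ∧ ∀ μ ∈ simplex d, ∀ ν ∈ simplex d, ∀ x y,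
      |α μ x y - α ν x y| ≤ K * l1 (μ - ν) := by
  choose k hk using fun x y => (hαD x y).1
  refine ⟨∑ x, ∑ y, |k x y|, by positivity, fun μ hμ ν hν x y => ?_⟩
  refine (hk x y μ hμ ν hν).trans (mul_le_mul_of_nonneg_right ?_ (l1_nonneg _))
  calc k x y ≤ |k x y| := le_abs_self _
    _ ≤ ∑ y, |k x y| := Finset.single_le_sum (f := fun y => |k x y|)
        (fun _ _ => abs_nonneg _) (Finset.mem_univ y)
    _ ≤ _ := Finset.single_le_sum (f := fun x => ∑ y, |k x y|)
        (fun _ _ => by positivity) (Finset.mem_univ x)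

lemma rate_bound {d : ℕ} {α : (Fin d → ℝ) → Matrix (Fin d) (Fin d) ℝ}
    {δα : (Fin d → ℝ) → Fin d → Matrix (Fin d) (Fin d) ℝ} (hαD : DLipRate α δα) :
    ∃ A : ℝ, 0 ≤ A ∧ ∀ μ ∈ simplex d, ∀ x y, |α μ x y| ≤ A := by
  obtain ⟨K, hK, h⟩ := rate_lip hαD
  refine ⟨∑ x, ∑ y, |α (bvec x) x y| + K * 2, by positivity, fun μ hμ x y => ?_⟩
  have h1 := h μ hμ (bvec x) (bvec_mem x) x y
  have h2 := mul_le_mul_of_nonneg_left (l1_sub_simplex hμ (bvec_mem x)) hK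
  have h3 : |α (bvec x) x y| ≤ ∑ x, ∑ y, |α (bvec x) x y| :=
    (Finset.single_le_sum (f := fun y => |α (bvec x) x y|)
        (fun _ _ => abs_nonneg _) (Finset.mem_univ y)).trans
      (Finset.single_le_sum (f := fun x => ∑ y, |α (bvec x) x y|)
        (fun _ _ => by positivity) (Finset.mem_univ x))
  have h4 := abs_sub_abs_le_abs_sub (α μ x y) (α (bvec x) x y)
  linarith

lemma drift_lip {d : ℕ} {α : (Fin d → ℝ) → Matrix (Fin d) (Fin d) ℝ}
    {δα : (Fin d → ℝ) → Fin d → Matrix (Fin d) (Fin d) ℝ} (hαD : DLipRate α δα) :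
    ∃ K : NNReal, LipschitzOnWith K (fun μ => Matrix.vecMul μ (α μ)) (simplex d) := by
  obtain ⟨K, hK, hL⟩ := rate_lip hαD
  obtain ⟨A, hA, hB⟩ := rate_bound hαD
  refine ⟨Real.toNNReal ((A + K) * d), LipschitzOnWith.of_dist_le_mul fun μ hμ ν hν => ?_⟩
  rw [Real.coe_toNNReal _ (by positivity), dist_pi_le_iff (by positivity)]
  intro y
  rw [Real.dist_eq, dist_eq_norm]
  have e : Matrix.vecMul μ (α μ) y - Matrix.vecMul ν (α ν) y =
      ∑ x, ((μ x - ν x) * α μ x y + ν x * (α μ x y - α ν x y)) := by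
    simp only [Matrix.vecMul, dotProduct, ← Finset.sum_sub_distrib]
    exact Finset.sum_congr rfl fun x _ => by ring
  rw [e]
  calc _ ≤ ∑ x, |(μ x - ν x) * α μ x y + ν x * (α μ x y - α ν x y)| :=
        Finset.abs_sum_le_sum_abs _ _
    _ ≤ ∑ x, (|(μ - ν) x| * A + ν x * (K * l1 (μ - ν))) := by
        refine Finset.sum_le_sum fun x _ => (abs_add_le _ _).trans ?_
        rw [abs_mul, abs_mul, abs_of_nonneg (hν.1 x)]
        have := hν.1 x
        exact add_le_add (mul_le_mul_of_nonneg_left (hB μ hμ x y) (abs_nonneg _))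
          (mul_le_mul_of_nonneg_left (hL μ hμ ν hν x y) this)
    _ = (A + K) * l1 (μ - ν) := by
        rw [Finset.sum_add_distrib, ← Finset.sum_mul, ← Finset.sum_mul, hν.2]
        unfold l1
        ring
    _ ≤ (A + K) * (d * ‖μ - ν‖) := by
        have := l1_le_norm (μ - ν)
        gcongr
    _ = _ := by ring

lemma flow_semigroup {d : ℕ} {α : (Fin d → ℝ) → Matrix (Fin d) (Fin d) ℝ}
    {δα : (Fin d → ℝ) → Fin d → Matrix (Fin d) (Fin d) ℝ}
    {m : ℝ → (Fin d → ℝ) → Fin d → ℝ} (hαD : DLipRate α δα) (hm : IsFlow α m)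
    {a b : ℝ} (ha : 0 ≤ a) (hb : 0 ≤ b) {μ : Fin d → ℝ} (hμ : μ ∈ simplex d) :
    m (a + b) μ = m a (m b μ) := by
  obtain ⟨K, hK⟩ := drift_lip hαD
  obtain ⟨_, hS, hD⟩ := hm μ hμ
  obtain ⟨h0', hS', hD'⟩ := hm (m b μ) (hS b hb)
  have hd1 : ∀ t, 0 ≤ t → HasDerivAt (fun s => m (s + b) μ)
      (Matrix.vecMul (m (t + b) μ) (α (m (t + b) μ))) t := fun t ht =>
    HasDerivAt.comp_add_const t b (hD (t + b) (by linarith))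
  have := ODE_solution_unique_of_mem_Icc_right (a := 0) (b := a)
    (v := fun _ μ => Matrix.vecMul μ (α μ)) (s := fun _ => simplex d) (K := K)
    (f := fun t => m (t + b) μ) (g := fun t => m t (m b μ))
    (fun _ _ => hK)
    (fun t ht => (hd1 t ht.1).continuousAt.continuousWithinAt)
    (fun t ht => (hd1 t ht.1).hasDerivWithinAt)
    (fun t ht => hS _ (by linarith [ht.1]))
    (fun t ht => (hD' t ht.1).continuousAt.continuousWithinAt)
    (fun t ht => (hD' t ht.1).hasDerivWithinAt)
    (fun t ht => hS' t ht.1)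
    (by simp [h0'])
  exact this ⟨ha, le_rfl⟩

/-- First-order expansion of the flow at a fixed time, in ℓ¹ norm. -/
lemma taylor_flow {d : ℕ} {m : ℝ → (Fin d → ℝ) → Fin d → ℝ}
    {δm : ℝ → (Fin d → ℝ) → Fin d → Fin d → ℝ} {lam c₁ k₁ : ℝ} (hErg : Erg m δm lam c₁ k₁)
    {t : ℝ} (ht : 0 ≤ t) {μ ν : Fin d → ℝ} (hμ : μ ∈ simplex d) (hν : ν ∈ simplex d) :
    (∀ z x, |δm t μ z x| ≤ 2 * (c₁ * Real.exp (-lam * t))) ∧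
    l1 (m t ν - m t μ - fun x => dotProduct (fun z => δm t μ z x) (ν - μ)) ≤
      d * (k₁ * l1 (ν - μ) ^ 2) := by
  obtain ⟨hlam, hc, hk, hE1, hE2, hE3⟩ := hErg
  have hpos : 0 ≤ c₁ * Real.exp (-lam * t) := by positivity
  have hF : ∀ x, ∀ μ ∈ simplex d, ∀ ν ∈ simplex d,
      |m t μ x - m t ν x| ≤ (c₁ * Real.exp (-lam * t)) * l1 (μ - ν) := fun x μ hμ ν hν =>
    (abs_le_l1 (m t μ - m t ν) x).trans (hE1 t ht μ hμ ν hν)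
  refine ⟨fun z x => abs_lfderiv_le hpos (hF x) hμ (hE2 t ht μ hμ z x),
    l1_le_card_mul _ _ fun x => ?_⟩
  exact taylor_simplex (F := fun η => m t η x) (w := fun η z => δm t η z x) hpos hk.le (hF x)
    (fun η hη z => hE2 t ht η hη z x)
    (fun η hη η' hη' z => (abs_le_l1 (δm t η z - δm t η' z) x).trans (hE3 t ht η hη η' hη' z))
    hμ hν

/-- The function `U(t, ·) = Φ ∘ m(t; ·)` has a first-order expansion whose quadratic remainder
decays exponentially in `t`. (Erg) bounds the remainder of `m(t; ·)` only uniformly in `t`; the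
decay comes from writing `m(t; ·) = m(t/2; ·) ∘ m(t/2; ·)`, as each second-order term of the
composition carries at least one contracting first-order factor `exp (-lam * t / 2)`. -/
lemma taylor_U {d : ℕ} {α : (Fin d → ℝ) → Matrix (Fin d) (Fin d) ℝ}
    {δα : (Fin d → ℝ) → Fin d → Matrix (Fin d) (Fin d) ℝ}
    {m : ℝ → (Fin d → ℝ) → Fin d → ℝ}
    {δm : ℝ → (Fin d → ℝ) → Fin d → Fin d → ℝ} {lam c₁ k₁ : ℝ}
    (hαD : DLipRate α δα) (hm : IsFlow α m) (hErg : Erg m δm lam c₁ k₁)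
    {Φ : (Fin d → ℝ) → ℝ} {δΦ : (Fin d → ℝ) → Fin d → ℝ} (hΦ : DLipR Φ δΦ) :
    ∃ C : ℝ, 0 ≤ C ∧ ∀ t, 0 ≤ t → ∀ μ ∈ simplex d, ∃ w : Fin d → ℝ, ∀ ν ∈ simplex d,
      |Φ (m t ν) - Φ (m t μ) - dotProduct w (ν - μ)| ≤
        C * Real.exp (-(lam / 2) * t) * l1 (ν - μ) ^ 2 := by
  obtain ⟨⟨K₀, hK₀⟩, hΦ2, ⟨K₁, hK₁⟩⟩ := hΦ
  have hΦL : ∀ μ ∈ simplex d, ∀ ν ∈ simplex d, |Φ μ - Φ ν| ≤ |K₀| * l1 (μ - ν) :=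
    fun μ hμ ν hν => (hK₀ μ hμ ν hν).trans
      (mul_le_mul_of_nonneg_right (le_abs_self _) (l1_nonneg _))
  have hΦ'L : ∀ μ ∈ simplex d, ∀ ν ∈ simplex d, ∀ z,
      |δΦ μ z - δΦ ν z| ≤ |K₁| * l1 (μ - ν) := fun μ hμ ν hν z =>
    (abs_le_l1 (δΦ μ - δΦ ν) z).trans ((hK₁ μ hμ ν hν).trans
      (mul_le_mul_of_nonneg_right (le_abs_self _) (l1_nonneg _)))
  have hE := hErg
  obtain ⟨hlam, hc, hk, hE1, -, -⟩ := hE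
  refine ⟨|K₁| * c₁ ^ 4 + 2 * |K₀| * (d * k₁ * c₁ ^ 2 + d * (2 * c₁) * (d * k₁)),
    by positivity, fun t ht μ hμ => ?_⟩
  obtain ⟨a, rfl⟩ : ∃ a, t = a + a := ⟨t / 2, by ring⟩
  have ha : 0 ≤ a := by linarith
  have hexp : Real.exp (-(lam / 2) * (a + a)) = Real.exp (-lam * a) := by congr 1; ring
  rw [hexp]
  have he0 : 0 ≤ Real.exp (-lam * a) := (Real.exp_pos _).le
  have he1 : Real.exp (-lam * a) ≤ 1 := by
    rw [Real.exp_le_one_iff]; nlinarith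
  set E := Real.exp (-lam * a) with hEdef
  have hμ' : m a μ ∈ simplex d := (hm μ hμ).2.1 a ha
  have hμ'' : m a (m a μ) ∈ simplex d := (hm _ hμ').2.1 a ha
  -- The derivatives of the two factors and their composition with that of `Φ`.
  let L₁ : (Fin d → ℝ) → Fin d → ℝ := fun v x => dotProduct (fun z => δm a μ z x) v
  let L₂ : (Fin d → ℝ) → Fin d → ℝ := fun v x => dotProduct (fun z => δm a (m a μ) z x) v
  let g := δΦ (m a (m a μ))
  refine ⟨fun z => dotProduct g (L₂ (δm a μ z)), fun ν hν => ?_⟩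
  have hν' : m a ν ∈ simplex d := (hm ν hν).2.1 a ha
  have hν'' : m a (m a ν) ∈ simplex d := (hm _ hν').2.1 a ha
  rw [flow_semigroup hαD hm ha ha hμ, flow_semigroup hαD hm ha ha hν]
  have hlin : dotProduct (fun z => dotProduct g (L₂ (δm a μ z))) (ν - μ) =
      dotProduct g (L₂ (L₁ (ν - μ))) := by
    simp only [L₁, L₂, dotProduct, Finset.mul_sum, Finset.sum_mul]
    rw [Finset.sum_comm]
    refine Finset.sum_congr rfl fun x _ => ?_
    rw [Finset.sum_comm]
    refine Finset.sum_congr rfl fun y _ => Finset.sum_congr rfl fun z _ => by ring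
  rw [hlin]
  set ℓ := l1 (ν - μ) with hℓ
  have hℓ0 : 0 ≤ ℓ := l1_nonneg _
  have c1 : l1 (m a ν - m a μ) ≤ c₁ * E * ℓ := hE1 a ha ν hν μ hμ
  have c2 : l1 (m a (m a ν) - m a (m a μ)) ≤ c₁ * E * (c₁ * E * ℓ) :=
    (hE1 a ha _ hν' _ hμ').trans (by gcongr)
  have t1 := (taylor_flow hErg ha hμ hν).2
  obtain ⟨b2, t2⟩ := taylor_flow hErg ha hμ' hν'
  have t3 := taylor_simplex (abs_nonneg K₀) (abs_nonneg K₁) hΦL hΦ2 hΦ'L hμ'' hν''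
  have bg : ∀ z, |g z| ≤ 2 * |K₀| := fun z =>
    abs_lfderiv_le (abs_nonneg _) hΦL hμ'' (hΦ2 _ hμ'' z)
  set r₁ := m a ν - m a μ - L₁ (ν - μ) with hr₁
  set r₂ := m a (m a ν) - m a (m a μ) - L₂ (m a ν - m a μ) with hr₂
  have t1' : l1 r₁ ≤ d * (k₁ * ℓ ^ 2) := t1
  have t2' : l1 r₂ ≤ d * (k₁ * l1 (m a ν - m a μ) ^ 2) := t2
  have hL₂ : L₂ r₁ = L₂ (m a ν - m a μ) - L₂ (L₁ (ν - μ)) := by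
    funext x
    simp only [hr₁, L₂, dotProduct_sub, Pi.sub_apply]
  have hL₂b : l1 (L₂ r₁) ≤ d * (2 * (c₁ * E) * (d * (k₁ * ℓ ^ 2))) := by
    refine l1_le_card_mul _ _ fun x => (abs_dot_le _ _ _ fun z => b2 z x).trans ?_
    gcongr
  have e : Φ (m a (m a ν)) - Φ (m a (m a μ)) - dotProduct g (L₂ (L₁ (ν - μ))) =
      (Φ (m a (m a ν)) - Φ (m a (m a μ)) - dotProduct g (m a (m a ν) - m a (m a μ))) +
        dotProduct g r₂ + dotProduct g (L₂ r₁) := by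
    rw [hL₂, hr₂]
    simp only [dotProduct_sub]
    ring
  rw [e]
  have f1 : |Φ (m a (m a ν)) - Φ (m a (m a μ)) - dotProduct g (m a (m a ν) - m a (m a μ))| ≤
      |K₁| * c₁ ^ 4 * E * ℓ ^ 2 := by
    have n0 := l1_nonneg (m a (m a ν) - m a (m a μ))
    calc _ ≤ _ := t3
      _ ≤ |K₁| * (c₁ * E * (c₁ * E * ℓ)) ^ 2 := by gcongr
      _ = |K₁| * c₁ ^ 4 * (E * (E * E * E)) * ℓ ^ 2 := by ring
      _ ≤ |K₁| * c₁ ^ 4 * (E * (1 * 1 * 1)) * ℓ ^ 2 := by gcongr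
      _ = _ := by ring
  have f2 : |dotProduct g r₂| ≤ 2 * |K₀| * (d * k₁ * c₁ ^ 2) * E * ℓ ^ 2 := by
    have n0 := l1_nonneg (m a ν - m a μ)
    calc _ ≤ 2 * |K₀| * l1 r₂ := abs_dot_le _ _ _ bg
      _ ≤ 2 * |K₀| * (d * (k₁ * (c₁ * E * ℓ) ^ 2)) := by
          gcongr
          refine t2'.trans ?_
          gcongr
      _ = 2 * |K₀| * (d * k₁ * c₁ ^ 2) * (E * E) * ℓ ^ 2 := by ring
      _ ≤ 2 * |K₀| * (d * k₁ * c₁ ^ 2) * (E * 1) * ℓ ^ 2 := by gcongr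
      _ = _ := by ring
  have f3 : |dotProduct g (L₂ r₁)| ≤ 2 * |K₀| * (d * (2 * c₁) * (d * k₁)) * E * ℓ ^ 2 := by
    calc _ ≤ 2 * |K₀| * l1 (L₂ r₁) := abs_dot_le _ _ _ bg
      _ ≤ 2 * |K₀| * (d * (2 * (c₁ * E) * (d * (k₁ * ℓ ^ 2)))) := by gcongr
      _ = _ := by ring
  calc _ ≤ _ := (abs_add_le _ _).trans (add_le_add_left (abs_add_le _ _) _)
    _ ≤ _ := add_le_add (add_le_add f1 f2) f3
    _ = _ := by ring

/-! ### The particle system -/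

lemma sum_empMeas_mul {d N : ℕ} (x : Fin N → Fin d) (g : Fin d → ℝ) :
    ∑ z, empMeas x z * g z = (∑ i, g (x i)) / N := by
  simp only [empMeas, div_mul_eq_mul_div, ← Finset.sum_div, Finset.sum_mul]
  rw [Finset.sum_comm]
  simp

lemma empMeas_mem {d N : ℕ} (hN : 1 ≤ N) (x : Fin N → Fin d) : empMeas x ∈ simplex d := by
  constructor
  · intro z
    unfold empMeas
    positivity
  · have h := sum_empMeas_mul x fun _ => 1
    have hN' : (N : ℝ) ≠ 0 := by positivity
    simpa [hN'] using h

lemma empMeas_update {d N : ℕ} (x : Fin N → Fin d) (i : Fin N) (y : Fin d) :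
    empMeas (Function.update x i y) - empMeas x = (1 / N : ℝ) • (bvec y - bvec (x i)) := by
  funext z
  simp only [empMeas, Pi.sub_apply, Pi.smul_apply, smul_eq_mul, bvec]
  rw [← sub_div, ← Finset.sum_sub_distrib, Finset.sum_eq_single i]
  · simp only [Function.update_self, @eq_comm _ z]
    ring
  · intro j _ hj
    simp [Function.update_of_ne hj]
  · simp

lemma dot_bvec_sub {d : ℕ} (w : Fin d → ℝ) (y z : Fin d) :
    dotProduct w (bvec y - bvec z) = w y - w z := by
  simp [dotProduct, bvec, mul_sub]

/-- On affine functions of the empirical measure, the generator is the drift of the Kolmogorov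
equation. -/
lemma gen_affine {d N : ℕ} {α : (Fin d → ℝ) → Matrix (Fin d) (Fin d) ℝ} (hα : IsRate d α)
    (hN : 1 ≤ N) (w : Fin d → ℝ) (x : Fin N → Fin d) :
    genQ α (fun x' => dotProduct w (empMeas x')) x =
      dotProduct w (Matrix.vecMul (empMeas x) (α (empMeas x))) := by
  have h0 := hα.2.2 _ (empMeas_mem hN x)
  have hR : dotProduct w (Matrix.vecMul (empMeas x) (α (empMeas x))) =
      ∑ z, empMeas x z * ∑ y, α (empMeas x) z y * w y := by
    simp only [dotProduct, Matrix.vecMul, Finset.mul_sum]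
    rw [Finset.sum_comm]
    exact Finset.sum_congr rfl fun z _ => Finset.sum_congr rfl fun y _ => by ring
  rw [hR, sum_empMeas_mul x fun z => ∑ y, α (empMeas x) z y * w y, Finset.sum_div]
  unfold genQ
  refine Finset.sum_congr rfl fun i _ => ?_
  simp only [← dotProduct_sub, empMeas_update, dotProduct_smul, dot_bvec_sub, smul_eq_mul]
  rw [Finset.sum_filter_of_ne]
  · have h1 : ∀ y, α (empMeas x) (x i) y * (1 / N * (w y - w (x i))) =
        (α (empMeas x) (x i) y * w y) / N - α (empMeas x) (x i) y * (w (x i) / N) := fun y => by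
      ring
    simp only [h1, Finset.sum_sub_distrib, ← Finset.sum_mul, h0, zero_mul, sub_zero,
      ← Finset.sum_div]
  · intro y _ hy he
    apply hy
    rw [he]
    simp

/-- If `G` has a first-order expansion with quadratic remainder, the generator of the particle
system applied to `G` differs from its derivative along the drift by `O(1/N)`: each of the `N`
particles jumps by a distance at most `2 / N`. -/
lemma gen_error {d N : ℕ} {α : (Fin d → ℝ) → Matrix (Fin d) (Fin d) ℝ} (hα : IsRate d α)
    (hN : 1 ≤ N) {A : ℝ} (hA : 0 ≤ A) (hB : ∀ μ ∈ simplex d, ∀ x y, |α μ x y| ≤ A)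
    {G : (Fin d → ℝ) → ℝ} {w : Fin d → ℝ} {R : ℝ} (hR : 0 ≤ R) (x : Fin N → Fin d)
    (hG : ∀ ν ∈ simplex d, |G ν - G (empMeas x) - dotProduct w (ν - empMeas x)| ≤
      R * l1 (ν - empMeas x) ^ 2) :
    |genQ α (fun x' => G (empMeas x')) x -
      dotProduct w (Matrix.vecMul (empMeas x) (α (empMeas x)))| ≤ 4 * d * A * R / N := by
  have hN' : (0 : ℝ) < N := by exact_mod_cast hN
  rw [← gen_affine hα hN]
  unfold genQ
  rw [← Finset.sum_sub_distrib]
  have hterm : ∀ i y, |α (empMeas x) (x i) y *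
      (G (empMeas (Function.update x i y)) - G (empMeas x)) - α (empMeas x) (x i) y *
      (dotProduct w (empMeas (Function.update x i y)) - dotProduct w (empMeas x))| ≤
      A * (R * (2 / N) ^ 2) := by
    intro i y
    rw [← mul_sub, ← dotProduct_sub, abs_mul]
    have h1 := hG _ (empMeas_mem hN (Function.update x i y))
    have h2 : l1 (empMeas (Function.update x i y) - empMeas x) ≤ 2 / N := by
      rw [empMeas_update, l1_smul, abs_of_pos (by positivity)]
      have := l1_sub_simplex (bvec_mem y) (bvec_mem (x i))
      calc _ ≤ 1 / (N : ℝ) * 2 := by gcongr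
        _ = _ := by ring
    have h3 := l1_nonneg (empMeas (Function.update x i y) - empMeas x)
    gcongr
    · exact hB _ (empMeas_mem hN x) _ _
    · refine h1.trans ?_
      gcongr
  calc _ ≤ ∑ _i : Fin N, ∑ _y : Fin d, A * (R * (2 / N) ^ 2) := by
        refine (Finset.abs_sum_le_sum_abs _ _).trans (Finset.sum_le_sum fun i _ => ?_)
        rw [← Finset.sum_sub_distrib]
        refine (Finset.abs_sum_le_sum_abs _ _).trans ?_
        refine (Finset.sum_le_sum fun y _ => hterm i y).trans ?_
        exact Finset.sum_le_sum_of_subset_of_nonneg (Finset.subset_univ _)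
          fun _ _ _ => by positivity
    _ = _ := by
        simp only [Finset.sum_const, Finset.card_univ, Fintype.card_fin, nsmul_eq_mul]
        field_simp
        ring

/-- The backward equation: the right time derivative of `U(t, μ) = Φ (m(t; μ))` is the derivative
of `U(t, ·)` at `μ` along the drift, because `U(t + h, μ) = U(t, m(h; μ))`. -/
lemma backward_equation {d : ℕ} {α : (Fin d → ℝ) → Matrix (Fin d) (Fin d) ℝ}
    {δα : (Fin d → ℝ) → Fin d → Matrix (Fin d) (Fin d) ℝ}
    {m : ℝ → (Fin d → ℝ) → Fin d → ℝ} (hαD : DLipRate α δα) (hm : IsFlow α m)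
    {Φ : (Fin d → ℝ) → ℝ} {t : ℝ} (ht : 0 ≤ t) {μ : Fin d → ℝ} (hμ : μ ∈ simplex d)
    {w : Fin d → ℝ} {R : ℝ} (hR : 0 ≤ R)
    (hw : ∀ ν ∈ simplex d, |Φ (m t ν) - Φ (m t μ) - dotProduct w (ν - μ)| ≤
      R * l1 (ν - μ) ^ 2) :
    HasDerivWithinAt (fun s => Φ (m s μ)) (dotProduct w (Matrix.vecMul μ (α μ)))
      (Set.Ici t) t := by
  obtain ⟨h0, hS, hD⟩ := hm μ hμ
  have hγ : HasDerivAt (fun s => m (s - t) μ) (Matrix.vecMul μ (α μ)) t := by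
    have := hD 0 le_rfl
    rw [h0, ← sub_self t] at this
    exact HasDerivAt.comp_sub_const t t this
  have hg : HasDerivAt (fun s => dotProduct w (m (s - t) μ))
      (dotProduct w (Matrix.vecMul μ (α μ))) t := by
    unfold dotProduct
    exact HasDerivAt.fun_sum fun z _ => (hasDerivAt_pi.1 hγ z).const_mul (w z)
  refine hasDerivWithinAt_of_quadratic (g := fun s => dotProduct w (m (s - t) μ))
    (r := fun s => m (s - t) μ - μ) (C := R * d ^ 2) hg.hasDerivWithinAt
    (hγ.sub_const μ).hasDerivWithinAt (by simp [h0]) ?_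
  filter_upwards [self_mem_nhdsWithin] with s hs
  have hs' : 0 ≤ s - t := sub_nonneg.2 hs
  have e : m s μ = m t (m (s - t) μ) := by
    rw [← flow_semigroup hαD hm ht hs' hμ]
    congr 1
    ring
  have h1 := hw _ (hS _ hs')
  simp only [sub_self, h0, e]
  have h2 := l1_le_norm (m (s - t) μ - μ)
  have h3 := l1_nonneg (m (s - t) μ - μ)
  calc _ = |Φ (m t (m (s - t) μ)) - Φ (m t μ) - dotProduct w (m (s - t) μ - μ)| := by
        rw [dotProduct_sub]; congr 1; ring
    _ ≤ R * l1 (m (s - t) μ - μ) ^ 2 := h1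
    _ ≤ R * (d * ‖m (s - t) μ - μ‖) ^ 2 := by gcongr
    _ = _ := by ring

/-- The time-propagation error term: with `U(t,μ) := Φ(m(t;μ))` and
`U_t(s,x) := U(t-s, μ^N_x)`, the expectation of `U_t(t, X_t) - U_t(0, X_0)` is `O(1/N)`,
uniformly in `t` and in the (arbitrary) initial law `p 0`. -/
theorem first_term_bound {d : ℕ} (hd : 1 < d)
    (α : (Fin d → ℝ) → Matrix (Fin d) (Fin d) ℝ)
    (δα : (Fin d → ℝ) → Fin d → Matrix (Fin d) (Fin d) ℝ)
    (m : ℝ → (Fin d → ℝ) → Fin d → ℝ)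
    (δm : ℝ → (Fin d → ℝ) → Fin d → Fin d → ℝ)
    (lam c₁ k₁ : ℝ)
    (hα : IsRate d α) (hαD : DLipRate α δα)
    (hm : IsFlow α m) (hErg : Erg m δm lam c₁ k₁)
    (Φ : (Fin d → ℝ) → ℝ) (δΦ : (Fin d → ℝ) → Fin d → ℝ) (hΦ : DLipR Φ δΦ) :
    ∃ C : ℝ, ∀ N : ℕ, 1 ≤ N →
      ∀ p : ℝ → (Fin N → Fin d) → ℝ, IsLaw α p →
        ∀ t : ℝ, 0 ≤ t →
          |(∑ x : Fin N → Fin d, p t x * Φ (m (t - t) (empMeas x))) -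
            ∑ x : Fin N → Fin d, p 0 x * Φ (m (t - 0) (empMeas x))| ≤ C / N := by
  obtain ⟨C, hC, hU⟩ := taylor_U hαD hm hErg hΦ
  obtain ⟨A, hA, hB⟩ := rate_bound hαD
  have hlam : 0 < lam := hErg.1
  refine ⟨4 * d * A * C * (2 / lam), fun N hN p hp t ht => ?_⟩
  have hN' : (0 : ℝ) < N := by exact_mod_cast hN
  choose w hw using hU
  -- Reversing time makes the one-sided backward equation a statement on right derivatives.
  let h : ℝ → ℝ := fun τ => ∑ x : Fin N → Fin d, p (t - τ) x * Φ (m τ (empMeas x))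
  let W : ℝ → (Fin N → Fin d) → ℝ := fun τ x =>
    if hτ : 0 ≤ τ then w τ hτ (empMeas x) (empMeas_mem hN x) ⬝ᵥ
      Matrix.vecMul (empMeas x) (α (empMeas x)) else 0
  let h' : ℝ → ℝ := fun τ => ∑ x : Fin N → Fin d, p (t - τ) x *
    (W τ x - genQ α (fun x' => Φ (m τ (empMeas x'))) x)
  have hpd : ∀ s, 0 ≤ s → ∀ x, DifferentiableAt ℝ (fun s => p s x) s := by
    intro s hs x
    have := (hp.2 (fun x' => if x' = x then 1 else 0) s hs).differentiableAt
    simpa using this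
  have hUd : ∀ τ, 0 ≤ τ → ∀ x : Fin N → Fin d,
      HasDerivWithinAt (fun s => Φ (m s (empMeas x))) (W τ x) (Set.Ici τ) τ := by
    intro τ hτ x
    simp only [W, hτ, dif_pos]
    exact backward_equation hαD hm hτ (empMeas_mem hN x) (by positivity)
      (hw τ hτ _ (empMeas_mem hN x))
  have hder : ∀ τ ∈ Set.Ico 0 t, HasDerivWithinAt h (h' τ) (Set.Ici τ) τ := by
    intro τ hτ
    have hs : 0 ≤ t - τ := by linarith [hτ.2]
    have hp1 : ∀ x, HasDerivAt (fun τ => p (t - τ) x) (-deriv (fun s => p s x) (t - τ)) τ :=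
      fun x => HasDerivAt.comp_const_sub t τ (hpd _ hs x).hasDerivAt
    have h1 : HasDerivWithinAt h (∑ x : Fin N → Fin d,
        (-deriv (fun s => p s x) (t - τ) * Φ (m τ (empMeas x)) + p (t - τ) x * W τ x))
        (Set.Ici τ) τ :=
      HasDerivWithinAt.fun_sum (u := Finset.univ) fun x _ => (hp1 x).hasDerivWithinAt.mul (hUd τ hτ.1 x)
    -- The forward equation, tested against `U(τ, ·)` frozen at time `τ`.
    have h2 : ∑ x : Fin N → Fin d, deriv (fun s => p s x) (t - τ) * Φ (m τ (empMeas x)) =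
        ∑ x, p (t - τ) x * genQ α (fun x' => Φ (m τ (empMeas x'))) x := by
      refine HasDerivAt.unique ?_ (hp.2 (fun x' => Φ (m τ (empMeas x'))) (t - τ) hs)
      exact HasDerivAt.fun_sum fun x _ => (hpd _ hs x).hasDerivAt.mul_const _
    convert! h1 using 1
    simp only [h', mul_sub, Finset.sum_sub_distrib, Finset.sum_add_distrib, neg_mul,
      Finset.sum_neg_distrib, h2]
    ring
  have hcont : ContinuousOn h (Set.Icc 0 t) := by
    refine continuousOn_finsetSum _ fun x _ => ContinuousOn.mul ?_ ?_
    · intro τ hτ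
      have hs : 0 ≤ t - τ := by linarith [hτ.2]
      have hd1 : HasDerivAt (fun τ => p (t - τ) x) (-deriv (fun s => p s x) (t - τ)) τ :=
        HasDerivAt.comp_const_sub t τ (hpd _ hs x).hasDerivAt
      exact hd1.continuousAt.continuousWithinAt
    · obtain ⟨_, hS, hD⟩ := hm _ (empMeas_mem hN x)
      obtain ⟨K, hK⟩ := hΦ.1
      exact (continuousOn_of_l1_lip hK).comp
        (fun τ hτ => (hD τ hτ.1).continuousAt.continuousWithinAt) fun τ hτ => hS τ hτ.1
  have hbound : ∀ τ ∈ Set.Ico 0 t,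
      ‖h' τ‖ ≤ 4 * d * A * C / N * Real.exp (-(lam / 2) * τ) := by
    intro τ hτ
    obtain ⟨hp0, hp1⟩ := hp.1 (t - τ) (by linarith [hτ.2])
    rw [Real.norm_eq_abs]
    calc |h' τ| ≤ ∑ x : Fin N → Fin d, p (t - τ) x *
          (4 * d * A * C / N * Real.exp (-(lam / 2) * τ)) := by
          refine (Finset.abs_sum_le_sum_abs _ _).trans (Finset.sum_le_sum fun x _ => ?_)
          rw [abs_mul, abs_of_nonneg (hp0 x), abs_sub_comm]
          refine mul_le_mul_of_nonneg_left ?_ (hp0 x)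
          simp only [W, hτ.1, dif_pos]
          refine (gen_error hα hN hA hB (G := fun ν => Φ (m τ ν)) (by positivity) x
            (hw τ hτ.1 _ (empMeas_mem hN x))).trans (le_of_eq ?_)
          ring
      _ = _ := by rw [← Finset.sum_mul, hp1, one_mul]
  set M : ℝ := 4 * d * A * C / N with hM
  have hM0 : 0 ≤ M := by positivity
  have hBd : ∀ τ : ℝ, HasDerivAt
      (fun τ => M * (2 / lam) * (1 - Real.exp (-(lam / 2) * τ)))
      (M * Real.exp (-(lam / 2) * τ)) τ := by
    intro τ
    have h1 : HasDerivAt (fun τ : ℝ => -(lam / 2) * τ) (-(lam / 2)) τ := by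
      simpa using (hasDerivAt_id τ).const_mul (-(lam / 2))
    have h2 := ((h1.exp).const_sub 1).const_mul (M * (2 / lam))
    convert! h2 using 1
    field_simp
  have key := image_norm_le_of_norm_deriv_right_le_deriv_boundary
    (f := fun τ => h τ - h 0) (f' := h') (a := 0) (b := t)
    (hcont.sub continuousOn_const) (fun τ hτ => (hder τ hτ).sub_const _)
    (B := fun τ => M * (2 / lam) * (1 - Real.exp (-(lam / 2) * τ)))
    (by simp) hBd hbound (x := t) ⟨ht, le_rfl⟩
  have e : (∑ x : Fin N → Fin d, p t x * Φ (m (t - t) (empMeas x))) -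
      ∑ x : Fin N → Fin d, p 0 x * Φ (m (t - 0) (empMeas x)) = -(h t - h 0) := by
    simp only [h, sub_self, sub_zero]
    ring
  rw [e, abs_neg]
  calc _ ≤ _ := key
    _ ≤ M * (2 / lam) * 1 := by
        have := Real.exp_pos (-(lam / 2) * t)
        gcongr
        linarith
    _ = _ := by rw [hM]; ring
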